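/- arXiv:1109.5114 — 3 statements merged into one kernel-verified Lean document; each statement's English description precedes it below -/
import Mathlib

section
/- Let σ > 0. For each integer N ≥ 2, set θ_k = (k−1)π/N and a = σ·√(24/N), and let μ_N be the N-fold convolution μ(a, θ₁) ∗ ⋯ ∗ μ(a, θ_N), where μ(a, θ) is the pushforward of the uniform probability measure on [−a/2, a/2] under t ↦ (t·cos θ, t·sin θ) : ℝ → ℝ². Then μ_N converges weakly (in distribution), as N → ∞, to the centered Gaussian measure on ℝ² with covariance σ²·I, i.e., the product measure of two one-dimensional Gaussian measures each with mean 0 and variance σ². -/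
open Real Filter MeasureTheory

/-- `uniformDir a θ` is the pushforward of the uniform probability measure on `[-a/2, a/2]`
under `t ↦ (t cos θ, t sin θ) : ℝ → ℝ²`. -/
noncomputable def uniformDir (a θ : ℝ) : Measure (Fin 2 → ℝ) :=
  Measure.map (fun t : ℝ => ![t * Real.cos θ, t * Real.sin θ])
    ((ENNReal.ofReal (1 / a)) • volume.restrict (Set.Icc (-(a / 2)) (a / 2)))


lemma aux_prod (n : ℕ) (f g : Fin n → ℝ) (hf : ∀ i, |f i| ≤ 1) (hg : ∀ i, |g i| ≤ 1) :
    |∏ i, f i - ∏ i, g i| ≤ ∑ i, |f i - g i| := by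
  induction n with
  | zero => simp
  | succ n ih =>
    rw [Fin.prod_univ_succ, Fin.prod_univ_succ, Fin.sum_univ_succ]
    have h := ih (fun i => f i.succ) (fun i => g i.succ) (fun i => hf _) (fun i => hg _)
    have hP : |∏ i : Fin n, f i.succ| ≤ 1 := by
      rw [Finset.abs_prod]
      exact Finset.prod_le_one (fun i _ => abs_nonneg _) (fun i _ => hf _)
    have e : f 0 * ∏ i : Fin n, f i.succ - g 0 * ∏ i : Fin n, g i.succ
        = (f 0 - g 0) * ∏ i : Fin n, f i.succ
          + g 0 * (∏ i : Fin n, f i.succ - ∏ i : Fin n, g i.succ) := by ring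
    rw [e]
    refine (abs_add_le _ _).trans (add_le_add ?_ ?_)
    · rw [abs_mul]
      exact mul_le_of_le_one_right (abs_nonneg _) hP
    · rw [abs_mul]
      exact (mul_le_of_le_one_left (abs_nonneg _) (hg 0)).trans h

lemma aux_sinc (x : ℝ) (hx : |x| ≤ 1) : |sinc x - Real.exp (-(x ^ 2 / 6))| ≤ x ^ 4 := by
  have hx2 : x ^ 2 ≤ 1 := by
    rw [← sq_abs]; exact pow_le_one₀ (abs_nonneg _) hx
  have h1 : |sinc x - (1 - x ^ 2 / 6)| ≤ x ^ 4 / 100 := by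
    by_cases h : x = 0
    · simp [h]
    · have hb := Real.sin_bound hx
      have hp : 0 < |x| := abs_pos.mpr h
      rw [sinc_of_ne_zero h]
      have e : sin x / x - (1 - x ^ 2 / 6) = (sin x - (x - x ^ 3 / 6)) / x := by
        field_simp
      rw [e, abs_div, div_le_iff₀ hp]
      have : x ^ 4 = |x| ^ 4 := by rw [show (4:ℕ) = 2 * 2 from rfl, pow_mul, pow_mul, sq_abs]
      rw [this]
      linarith [hb, show |x| ^ 4 / 100 * |x| = |x| ^ 5 / 100 by ring]
  have h2 : |Real.exp (-(x ^ 2 / 6)) - 1 - (-(x ^ 2 / 6))| ≤ (-(x ^ 2 / 6)) ^ 2 := by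
    apply Real.abs_exp_sub_one_sub_id_le
    rw [abs_neg, abs_of_nonneg (by positivity)]
    linarith
  rw [abs_le] at *
  have h4 : 0 ≤ x ^ 4 := by positivity
  have e : (-(x ^ 2 / 6)) ^ 2 = x ^ 4 / 36 := by ring
  rw [e] at h2
  constructor <;> linarith [h1.1, h1.2, h2.1, h2.2]

lemma aux_prob (a θ : ℝ) (ha : 0 < a) : IsProbabilityMeasure (uniformDir a θ) := by
  have : IsProbabilityMeasure
      ((ENNReal.ofReal (1 / a)) • volume.restrict (Set.Icc (-(a / 2)) (a / 2))) := by
    constructor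
    simp only [Measure.smul_apply, Measure.restrict_apply_univ, Real.volume_Icc, smul_eq_mul]
    rw [← ENNReal.ofReal_mul (by positivity)]
    rw [show 1 / a * (a / 2 - -(a / 2)) = 1 by field_simp; ring]
    simp
  unfold uniformDir
  exact Measure.isProbabilityMeasure_map (by fun_prop)

noncomputable def auxL (t : Fin 2 → ℝ) : StrongDual ℝ (Fin 2 → ℝ) :=
  t 0 • ContinuousLinearMap.proj 0 + t 1 • ContinuousLinearMap.proj 1

lemma auxL_apply (t z : Fin 2 → ℝ) : auxL t z = t 0 * z 0 + t 1 * z 1 := by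
  simp [auxL]

lemma aux_cf (a θ : ℝ) (ha : 0 < a) (t : Fin 2 → ℝ) :
    charFunDual (uniformDir a θ) (auxL t)
      = ((sinc (a / 2 * (t 0 * Real.cos θ + t 1 * Real.sin θ)) : ℝ) : ℂ) := by
  rw [charFunDual_apply, uniformDir, integral_map (by fun_prop)
    (by fun_prop)]
  rw [integral_smul_measure, integral_Icc_eq_integral_Ioc,
    ← intervalIntegral.integral_of_le (by linarith)]
  set s := t 0 * Real.cos θ + t 1 * Real.sin θ with hs
  have e : ∀ x : ℝ, Complex.exp ((auxL t ![x * Real.cos θ, x * Real.sin θ] : ℝ) * Complex.I)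
      = Complex.exp (((s * x : ℝ) : ℂ) * Complex.I) := by
    intro x
    rw [auxL_apply]
    congr 3
    simp [hs]; ring
  simp_rw [e]
  rw [ENNReal.toReal_ofReal (by positivity)]
  by_cases h : s = 0
  · simp [h]
    field_simp
    norm_num [ha.ne']
  · rw [intervalIntegral.integral_comp_mul_left
      (fun y : ℝ => Complex.exp ((y : ℂ) * Complex.I)) h]
    rw [show s * -(a / 2) = -(a / 2 * s) by ring, show s * (a / 2) = a / 2 * s by ring,
      integral_exp_mul_I_eq_sinc]
    have : (s : ℂ) ≠ 0 := by exact_mod_cast h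
    have : (a : ℂ) ≠ 0 := by exact_mod_cast ha.ne'
    simp
    field_simp

lemma aux_sum (N : ℕ) (hN : 2 ≤ N) (t : Fin 2 → ℝ) :
    ∑ k : Fin N, (t 0 * Real.cos ((k : ℝ) * π / N) + t 1 * Real.sin ((k : ℝ) * π / N)) ^ 2
      = N / 2 * (t 0 ^ 2 + t 1 ^ 2) := by
  have hN0 : (N : ℂ) ≠ 0 := by exact_mod_cast (by omega : N ≠ 0)
  have hz := (Complex.isPrimitiveRoot_exp N (by omega)).geom_sum_eq_zero (by omega)
  have hz' : ∑ k : Fin N, Complex.exp (((2 * ((k : ℝ) * π / N) : ℝ) : ℂ) * Complex.I) = 0 := by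
    rw [← hz, ← Fin.sum_univ_eq_sum_range (fun i => Complex.exp (2 * π * Complex.I / N) ^ i)]
    refine Finset.sum_congr rfl fun k _ => ?_
    rw [← Complex.exp_nat_mul]
    congr 1
    push_cast
    field_simp
  have hc : ∑ k : Fin N, Real.cos (2 * ((k : ℝ) * π / N)) = 0 := by
    have := congrArg Complex.re hz'
    rw [Complex.re_sum] at this
    simpa only [Complex.exp_ofReal_mul_I_re, Complex.zero_re] using this
  have hs : ∑ k : Fin N, Real.sin (2 * ((k : ℝ) * π / N)) = 0 := by
    have := congrArg Complex.im hz'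
    rw [Complex.im_sum] at this
    simpa only [Complex.exp_ofReal_mul_I_im, Complex.zero_im] using this
  have e : ∀ x : ℝ, (t 0 * Real.cos x + t 1 * Real.sin x) ^ 2
      = (t 0 ^ 2 + t 1 ^ 2) / 2 + (t 0 ^ 2 - t 1 ^ 2) / 2 * Real.cos (2 * x)
        + t 0 * t 1 * Real.sin (2 * x) := by
    intro x
    rw [Real.sin_two_mul, Real.cos_two_mul]
    have := Real.sin_sq_add_cos_sq x
    linear_combination (t 1 ^ 2) * this
  simp_rw [e, Finset.sum_add_distrib, ← Finset.mul_sum, hc, hs]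
  simp
  ring

lemma aux_lim (σ : ℝ) (t : Fin 2 → ℝ) :
    Tendsto (fun N : ℕ => ∏ k : Fin N, sinc (σ * Real.sqrt (24 / (N : ℝ)) / 2 *
      (t 0 * Real.cos ((k : ℝ) * π / N) + t 1 * Real.sin ((k : ℝ) * π / N)))) atTop
      (nhds (Real.exp (-(σ ^ 2 * (t 0 ^ 2 + t 1 ^ 2) / 2)))) := by
  set C : ℝ := 6 * σ ^ 2 * (t 0 ^ 2 + t 1 ^ 2) with hC
  have hC0 : 0 ≤ C := by positivity
  rw [tendsto_iff_dist_tendsto_zero]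
  have hlim : Tendsto (fun N : ℕ => C ^ 2 / (N : ℝ)) atTop (nhds 0) :=
    tendsto_const_div_atTop_nhds_zero_nat _
  refine squeeze_zero' (Eventually.of_forall fun _ => dist_nonneg) ?_ hlim
  obtain ⟨M, hM⟩ := exists_nat_ge C
  filter_upwards [eventually_ge_atTop 2, eventually_ge_atTop M] with N hN hNM
  have hNpos : (0 : ℝ) < N := by exact_mod_cast (by omega : 0 < N)
  have hNC : C ≤ N := hM.trans (by exact_mod_cast hNM)
  set x : Fin N → ℝ := fun k => σ * Real.sqrt (24 / (N : ℝ)) / 2 *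
      (t 0 * Real.cos ((k : ℝ) * π / N) + t 1 * Real.sin ((k : ℝ) * π / N)) with hx
  have hxsq : ∀ k, x k ^ 2 = 6 * σ ^ 2 / N *
      (t 0 * Real.cos ((k : ℝ) * π / N) + t 1 * Real.sin ((k : ℝ) * π / N)) ^ 2 := by
    intro k
    simp only [hx]
    rw [mul_pow, div_pow, mul_pow, Real.sq_sqrt (by positivity)]
    ring
  have hxC : ∀ k, x k ^ 2 ≤ C / N := by
    intro k
    rw [hxsq, hC]
    have : (t 0 * Real.cos ((k : ℝ) * π / N) + t 1 * Real.sin ((k : ℝ) * π / N)) ^ 2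
        ≤ t 0 ^ 2 + t 1 ^ 2 := by
      have h1 := Real.sin_sq_add_cos_sq ((k : ℝ) * π / N)
      have h2 := sq_nonneg (t 0 * Real.sin ((k : ℝ) * π / N) - t 1 * Real.cos ((k : ℝ) * π / N))
      have h3 : (t 0 * Real.cos ((k : ℝ) * π / N) + t 1 * Real.sin ((k : ℝ) * π / N)) ^ 2
        + (t 0 * Real.sin ((k : ℝ) * π / N) - t 1 * Real.cos ((k : ℝ) * π / N)) ^ 2
        = t 0 ^ 2 + t 1 ^ 2 := by linear_combination (t 0 ^ 2 + t 1 ^ 2) * h1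
      linarith
    calc _ ≤ 6 * σ ^ 2 / N * (t 0 ^ 2 + t 1 ^ 2) := by gcongr
      _ = _ := by ring
  have hx1 : ∀ k, |x k| ≤ 1 := by
    intro k
    rw [← sq_le_one_iff_abs_le_one]
    exact (hxC k).trans ((div_le_one hNpos).mpr hNC)
  have hexp : Real.exp (-(σ ^ 2 * (t 0 ^ 2 + t 1 ^ 2) / 2))
      = ∏ k, Real.exp (-(x k ^ 2 / 6)) := by
    rw [← Real.exp_sum, Finset.sum_neg_distrib, ← Finset.sum_div]
    simp_rw [hxsq]
    rw [← Finset.mul_sum, aux_sum N hN t]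
    congr 2
    field_simp
  rw [hexp, Real.dist_eq]
  refine (aux_prod N _ _ (fun i => abs_sinc_le_one _) (fun i => ?_)).trans ?_
  · rw [abs_of_pos (Real.exp_pos _), Real.exp_le_one_iff]
    have := sq_nonneg (x i)
    linarith
  · calc ∑ k, |sinc (x k) - Real.exp (-(x k ^ 2 / 6))| ≤ ∑ k : Fin N, (C / N) ^ 2 := by
          refine Finset.sum_le_sum fun k _ => (aux_sinc _ (hx1 k)).trans ?_
          rw [show x k ^ 4 = (x k ^ 2) ^ 2 by ring]
          have := hxC k
          gcongr
      _ = C ^ 2 / N := by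
          simp
          field_simp

lemma aux_charFun (μ : Measure (Fin 2 → ℝ)) (t : EuclideanSpace ℝ (Fin 2)) :
    charFun (μ.map (WithLp.toLp 2)) t = charFunDual μ (auxL t.ofLp) := by
  rw [charFun_apply, charFunDual_apply, ← MeasurableEquiv.coe_toLp, integral_map_equiv]
  congr 1
  ext z
  rw [auxL_apply]
  simp [PiLp.inner_apply, Fin.sum_univ_two]

/-- For `σ > 0`, the `N`-fold convolutions `μ(a, θ₁) ∗ ⋯ ∗ μ(a, θ_N)` (realized as the
pushforward of the product measure under the sum map), with `θ_k = (k-1)π/N` and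
`a = σ √(24/N)`, converge weakly as `N → ∞` to the centered Gaussian measure on `ℝ²` with
covariance `σ² I`, i.e. the product of two one-dimensional Gaussians with mean `0` and
variance `σ²`: the integrals of every bounded continuous function converge. -/
theorem uniformDir_conv_tendsto_gaussian (σ : ℝ) (hσ : 0 < σ) :
    ∀ f : BoundedContinuousFunction (Fin 2 → ℝ) ℝ,
      Tendsto (fun N : ℕ =>
          ∫ z, f z ∂(Measure.map (fun v : Fin N → (Fin 2 → ℝ) => ∑ k, v k)
            (Measure.pi fun k : Fin N =>
              uniformDir (σ * Real.sqrt (24 / (N : ℝ))) ((k : ℝ) * π / (N : ℝ)))))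
        atTop
        (nhds (∫ z, f z
          ∂(Measure.pi fun _ : Fin 2 => ProbabilityTheory.gaussianReal 0 (σ ^ 2).toNNReal))) := by
  intro f
  have ha : ∀ N : ℕ, ∀ k : Fin N, 0 < σ * Real.sqrt (24 / (N : ℝ)) := by
    intro N k
    have : (0 : ℝ) < N := by exact_mod_cast (Fin.pos k)
    positivity
  have hp : ∀ N : ℕ, ∀ k : Fin N, IsProbabilityMeasure
      (uniformDir (σ * Real.sqrt (24 / (N : ℝ))) ((k : ℝ) * π / (N : ℝ))) :=
    fun N k => aux_prob _ _ (ha N k)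
  set m : ℕ → Measure (Fin 2 → ℝ) := fun N =>
    Measure.map (fun v : Fin N → (Fin 2 → ℝ) => ∑ k, v k)
            (Measure.pi fun k : Fin N =>
              uniformDir (σ * Real.sqrt (24 / (N : ℝ))) ((k : ℝ) * π / (N : ℝ))) with hm
  set g : Measure (Fin 2 → ℝ) :=
    Measure.pi fun _ : Fin 2 => ProbabilityTheory.gaussianReal 0 (σ ^ 2).toNNReal with hg
  have hmp : ∀ N, IsProbabilityMeasure (m N) := by
    intro N
    exact Measure.isProbabilityMeasure_map (by fun_prop)
  have hmp' : ∀ N, IsProbabilityMeasure ((m N).map (WithLp.toLp 2)) := by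
    intro N
    exact Measure.isProbabilityMeasure_map (by fun_prop)
  have hgp' : IsProbabilityMeasure (g.map (WithLp.toLp 2)) := by
    exact Measure.isProbabilityMeasure_map (by fun_prop)
  let P : ℕ → ProbabilityMeasure (EuclideanSpace ℝ (Fin 2)) := fun N => ⟨_, hmp' N⟩
  let G : ProbabilityMeasure (EuclideanSpace ℝ (Fin 2)) := ⟨_, hgp'⟩
  have key : Tendsto P atTop (nhds G) := by
    apply ProbabilityMeasure.tendsto_of_tendsto_charFun
    intro t
    change Tendsto (fun N => charFun ((m N).map (WithLp.toLp 2)) t) atTop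
      (nhds (charFun (g.map (WithLp.toLp 2)) t))
    have e1 : ∀ N, charFun ((m N).map (WithLp.toLp 2)) t =
        ((∏ k : Fin N, sinc (σ * Real.sqrt (24 / (N : ℝ)) / 2 *
      (t.ofLp 0 * Real.cos ((k : ℝ) * π / N) + t.ofLp 1 * Real.sin ((k : ℝ) * π / N))) : ℝ) : ℂ) := by
      intro N
      rw [aux_charFun, hm]
      simp only
      rw [ProbabilityTheory.charFunDual_map_sum_pi_eq_prod, Finset.prod_apply, Complex.ofReal_prod]
      exact Finset.prod_congr rfl fun k _ => aux_cf _ _ (ha N k) _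
    have e2 : charFun (g.map (WithLp.toLp 2)) t =
        ((Real.exp (-(σ ^ 2 * (t.ofLp 0 ^ 2 + t.ofLp 1 ^ 2) / 2)) : ℝ) : ℂ) := by
      rw [hg, charFun_pi]
      simp only [Fin.prod_univ_two, ProbabilityTheory.charFun_gaussianReal]
      rw [← Complex.exp_add, Complex.ofReal_exp]
      congr 1
      have : (((σ ^ 2).toNNReal : ℝ) : ℂ) = (σ : ℂ) ^ 2 := by
        rw [Real.coe_toNNReal _ (sq_nonneg σ)]; push_cast; rfl
      rw [this]
      push_cast
      ring
    simp_rw [e1, e2]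
    exact (Complex.continuous_ofReal.tendsto _).comp (aux_lim σ t.ofLp)
  rw [ProbabilityMeasure.tendsto_iff_forall_integral_tendsto] at key
  have h := key (f.compContinuous ⟨fun z => WithLp.ofLp z, by fun_prop⟩)
  have e : ∀ μ : Measure (Fin 2 → ℝ),
      ∫ z, (f.compContinuous ⟨fun z => WithLp.ofLp z, by fun_prop⟩ :
        BoundedContinuousFunction (EuclideanSpace ℝ (Fin 2)) ℝ) z ∂(μ.map (WithLp.toLp 2))
      = ∫ z, f z ∂μ := by
    intro μ
    rw [← MeasurableEquiv.coe_toLp, integral_map_equiv]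
    rfl
  simpa only [P, G, ProbabilityMeasure.coe_mk, e] using h
end

section
/- Let φ ∈ (0, π) with sin φ ≠ 0, cos φ ≠ 0, and tan φ ≠ cot φ, and set t = |tan φ − cot φ|/2 and e(φ) = (1 + t + √(1 + t²))/(1 + t − √(1 + t²)). Let a₁, a₂, a₃, a₄ > 0, let C_a = (1/24)·[[2a₁² + a₂² + a₄², a₂² − a₄²], [a₂² − a₄², 2a₃² + a₂² + a₄²]], and D = (a₁² − a₃²)² + (a₂² − a₄²)². If the unit vector (cos φ, sin φ) is an eigenvector of C_a corresponding to its larger eigenvalue (a₁² + a₂² + a₃² + a₄² + √D)/24, then the elongation satisfies (∑ a_k² + √D)/(∑ a_k² − √D) ≤ e(φ). -/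
open Real

/-- **Elongation bound.** Let `φ ∈ (0, π)` with `sin φ ≠ 0`, `cos φ ≠ 0`, `tan φ ≠ cot φ`, and
set `t = |tan φ − cot φ|/2`, `e(φ) = (1 + t + √(1+t²))/(1 + t − √(1+t²))`. If the unit vector
`(cos φ, sin φ)` is an eigenvector of the covariance matrix `C_a` of the four-directional box
spline for its larger eigenvalue `(∑ a_k² + √D)/24`, then the elongation satisfies
`(∑ a_k² + √D)/(∑ a_k² − √D) ≤ e(φ)`. -/
theorem elongation_le_bound (φ t e : ℝ) (hφ : φ ∈ Set.Ioo 0 π)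
    (hsin : Real.sin φ ≠ 0) (hcos : Real.cos φ ≠ 0)
    (htc : Real.tan φ ≠ Real.cos φ / Real.sin φ)
    (ht : t = |Real.tan φ - Real.cos φ / Real.sin φ| / 2)
    (he : e = (1 + t + Real.sqrt (1 + t ^ 2)) / (1 + t - Real.sqrt (1 + t ^ 2)))
    (a₁ a₂ a₃ a₄ D : ℝ)
    (h₁ : 0 < a₁) (h₂ : 0 < a₂) (h₃ : 0 < a₃) (h₄ : 0 < a₄)
    (hD : D = (a₁ ^ 2 - a₃ ^ 2) ^ 2 + (a₂ ^ 2 - a₄ ^ 2) ^ 2)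
    (C : Matrix (Fin 2) (Fin 2) ℝ)
    (hC : C = (1 / 24 : ℝ) • !![2 * a₁ ^ 2 + a₂ ^ 2 + a₄ ^ 2, a₂ ^ 2 - a₄ ^ 2;
                                a₂ ^ 2 - a₄ ^ 2, 2 * a₃ ^ 2 + a₂ ^ 2 + a₄ ^ 2])
    (heig : C.mulVec ![Real.cos φ, Real.sin φ] =
      ((a₁ ^ 2 + a₂ ^ 2 + a₃ ^ 2 + a₄ ^ 2 + Real.sqrt D) / 24) •
        ![Real.cos φ, Real.sin φ]) :
    (a₁ ^ 2 + a₂ ^ 2 + a₃ ^ 2 + a₄ ^ 2 + Real.sqrt D) /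
        (a₁ ^ 2 + a₂ ^ 2 + a₃ ^ 2 + a₄ ^ 2 - Real.sqrt D) ≤ e := by
  have e0 := congrFun heig 0
  have e1 := congrFun heig 1
  simp [hC, Matrix.mulVec, dotProduct, Fin.sum_univ_two] at e0 e1
  have hsc := Real.sin_sq_add_cos_sq φ
  rw [Real.tan_eq_sin_div_cos] at ht
  set c := Real.cos φ
  set s := Real.sin φ
  obtain ⟨r, hr⟩ : ∃ r, r = Real.sqrt D := ⟨_, rfl⟩
  rw [← hr] at e0 e1 ⊢
  obtain ⟨x, hx⟩ : ∃ x, x = a₁ ^ 2 - a₃ ^ 2 := ⟨_, rfl⟩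
  obtain ⟨y, hy⟩ : ∃ y, y = a₂ ^ 2 - a₄ ^ 2 := ⟨_, rfl⟩
  obtain ⟨S, hS⟩ : ∃ S, S = a₁ ^ 2 + a₂ ^ 2 + a₃ ^ 2 + a₄ ^ 2 := ⟨_, rfl⟩
  rw [← hx, ← hy] at hD
  have f0 : x * c + y * s = r * c := by rw [hx, hy]; linarith
  have f1 : y * c - x * s = r * s := by rw [hx, hy]; linarith
  have g0 : x = r * (c ^ 2 - s ^ 2) := by linear_combination c * f0 - s * f1 - x * hsc
  have g1 : y = 2 * r * s * c := by linear_combination s * f0 + c * f1 - y * hsc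
  have hSxy : |x| + |y| < S := by
    have p1 := pow_pos h₁ 2
    have p2 := pow_pos h₂ 2
    have p3 := pow_pos h₃ 2
    have p4 := pow_pos h₄ 2
    rcases abs_cases x with ⟨q, _⟩ | ⟨q, _⟩ <;> rcases abs_cases y with ⟨q', _⟩ | ⟨q', _⟩ <;>
      rw [q, q'] <;> linarith
  have ht0 : 0 < t := by
    rw [ht]
    have : s / c - c / s ≠ 0 := by
      rw [← Real.tan_eq_sin_div_cos]; exact sub_ne_zero.mpr htc
    positivity
  have htx : t * |y| = |x| := by
    have : (s / c - c / s) * y = 2 * (-x) := by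
      rw [g0, g1]; field_simp; ring
    have h := congrArg abs this
    rw [abs_mul, abs_mul, abs_neg, abs_two] at h
    rw [ht]; linarith
  have hrw : r = |y| * Real.sqrt (1 + t ^ 2) := by
    rw [hr, hD, ← Real.sqrt_sq (abs_nonneg y), ← Real.sqrt_mul (sq_nonneg _), sq_abs]
    congr 1
    rw [← sq_abs x, ← htx, mul_pow, sq_abs]; ring
  have hw0 : 0 ≤ Real.sqrt (1 + t ^ 2) := Real.sqrt_nonneg _
  have hw : Real.sqrt (1 + t ^ 2) < 1 + t := by
    rw [Real.sqrt_lt' (by linarith)]; nlinarith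
  rw [he, ← hS]
  set w := Real.sqrt (1 + t ^ 2)
  have hY := abs_nonneg y
  have hd : 0 < S - r := by rw [hrw]; nlinarith
  rw [div_le_div_iff₀ hd (by linarith), hrw]
  have : 0 ≤ w * (S - |y| * (1 + t)) := mul_nonneg hw0 (by linarith)
  linarith
end

section
/- Let a₁, a₂, a₃, a₄ > 0, and set p = 3·(a₁² − a₂² − a₃² + a₄²), q = 4·(a₁² + a₂² − a₃² − a₄²), and r = 5·(a₁² + a₂² + a₃² + a₄²). Let C′_a be the 2×2 matrix (1/60)·[[4a₁² + a₂² + a₃² + 4a₄², 2(a₁² + a₂² − a₃² − a₄²)], [2(a₁² + a₂² − a₃² − a₄²), a₁² + 4a₂² + 4a₃² + a₄²]]. Then the eigenvalues of C′_a are (r + √(p² + q²))/120 and (r − √(p² + q²))/120; moreover, if q ≠ 0, the vector (q, −p + √(p² + q²)) is an eigenvector of C′_a for the larger eigenvalue (r + √(p² + q²))/120, so the orientation θ satisfies tan θ = (−p + √(p² + q²))/q. -/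
open Real

/-- With `p = 3(a₁²−a₂²−a₃²+a₄²)`, `q = 4(a₁²+a₂²−a₃²−a₄²)`, `r = 5(a₁²+a₂²+a₃²+a₄²)`, the
eigenvalues of the covariance matrix `C′_a` of the second four-directional box spline are
`(r ± √(p²+q²))/120`; moreover, if `q ≠ 0`, the vector `(q, −p+√(p²+q²))` is an eigenvector
for the larger eigenvalue `(r+√(p²+q²))/120`, so the orientation `θ` satisfies
`tan θ = (−p+√(p²+q²))/q`. -/
theorem eigen_second_fourDirectional_cov (a₁ a₂ a₃ a₄ p q r : ℝ)
    (h₁ : 0 < a₁) (h₂ : 0 < a₂) (h₃ : 0 < a₃) (h₄ : 0 < a₄)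
    (hp : p = 3 * (a₁ ^ 2 - a₂ ^ 2 - a₃ ^ 2 + a₄ ^ 2))
    (hq : q = 4 * (a₁ ^ 2 + a₂ ^ 2 - a₃ ^ 2 - a₄ ^ 2))
    (hr : r = 5 * (a₁ ^ 2 + a₂ ^ 2 + a₃ ^ 2 + a₄ ^ 2))
    (C : Matrix (Fin 2) (Fin 2) ℝ)
    (hC : C = (1 / 60 : ℝ) •
      !![4 * a₁ ^ 2 + a₂ ^ 2 + a₃ ^ 2 + 4 * a₄ ^ 2,
          2 * (a₁ ^ 2 + a₂ ^ 2 - a₃ ^ 2 - a₄ ^ 2);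
        2 * (a₁ ^ 2 + a₂ ^ 2 - a₃ ^ 2 - a₄ ^ 2),
          a₁ ^ 2 + 4 * a₂ ^ 2 + 4 * a₃ ^ 2 + a₄ ^ 2]) :
    spectrum ℝ C =
        {(r + Real.sqrt (p ^ 2 + q ^ 2)) / 120, (r - Real.sqrt (p ^ 2 + q ^ 2)) / 120} ∧
      (q ≠ 0 →
        (![q, -p + Real.sqrt (p ^ 2 + q ^ 2)] : Fin 2 → ℝ) ≠ 0 ∧
        C.mulVec ![q, -p + Real.sqrt (p ^ 2 + q ^ 2)] =
          ((r + Real.sqrt (p ^ 2 + q ^ 2)) / 120) •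
            ![q, -p + Real.sqrt (p ^ 2 + q ^ 2)] ∧
        (∀ θ : ℝ, Real.cos θ ≠ 0 →
          (∃ c : ℝ, (![Real.cos θ, Real.sin θ] : Fin 2 → ℝ) =
            c • ![q, -p + Real.sqrt (p ^ 2 + q ^ 2)]) →
          Real.tan θ = (-p + Real.sqrt (p ^ 2 + q ^ 2)) / q)) := by
  have hs : Real.sqrt (p ^ 2 + q ^ 2) ^ 2 = p ^ 2 + q ^ 2 := Real.sq_sqrt (by positivity)
  have hC' : C = !![(r + p) / 120, q / 120; q / 120, (r - p) / 120] := by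
    rw [hC, hp, hq, hr]
    ext i j
    fin_cases i <;> fin_cases j <;> simp <;> ring
  clear hC hp hq hr
  generalize Real.sqrt (p ^ 2 + q ^ 2) = s at hs ⊢
  subst hC'
  refine ⟨?_, fun hq0 => ⟨?_, ?_, ?_⟩⟩
  · ext x
    rw [spectrum.mem_iff, Matrix.isUnit_iff_isUnit_det, isUnit_iff_ne_zero, not_not,
      Matrix.det_fin_two]
    simp only [Matrix.sub_apply, Matrix.algebraMap_matrix_apply, Set.mem_insert_iff,
      Set.mem_singleton_iff]
    simp
    constructor
    · intro h
      have h2 : (x - (r + s) / 120) * (x - (r - s) / 120) = 0 := by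
        linear_combination h - hs / 14400
      rcases mul_eq_zero.mp h2 with h3 | h3
      · left; linarith
      · right; linarith
    · rintro (h | h) <;> subst h <;> linear_combination hs / 14400
  · intro h
    exact hq0 (by simpa using congrFun h 0)
  · ext i
    fin_cases i
    · simp [Matrix.mulVec, dotProduct, Fin.sum_univ_two]
      ring
    · simp [Matrix.mulVec, dotProduct, Fin.sum_univ_two]
      linear_combination -hs / 120
  · rintro θ hc ⟨c, h⟩
    have e0 : Real.cos θ = c * q := by simpa using congrFun h 0
    have e1 : Real.sin θ = c * (-p + s) := by simpa using congrFun h 1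
    have hc0 : c ≠ 0 := by
      rintro rfl
      exact hc (by simpa using e0)
    rw [Real.tan_eq_sin_div_cos, e0, e1, mul_div_mul_left _ _ hc0]
end
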